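/- For any bijection f from the edge set of K_n to {1, ..., n(n-1)/2}, there exists a simple path (no repeated vertices) in K_n of length at least sqrt(n-1) whose edge labels under f are strictly increasing. -/

import Mathlib

/-- `IsDecreasing f t l` says that the labels of the successive edges of the vertex list `l` are
strictly decreasing and all below `t`. -/
def IsDecreasing {V : Type*} (f : Sym2 V → ℕ) : ℕ → List V → Prop
  | t, a :: b :: l => f s(a, b) < t ∧ IsDecreasing f (f s(a, b)) (b :: l)
  | _, _ => True

/-- The pairs of vertices of a list, where pairs of consecutive entries are listed once and all
other pairs twice. -/
def weightedPairs {V : Type*} : List V → List (Sym2 V)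
  | a :: b :: l => s(a, b) :: (l.map (s(a, ·)) ++ (l.map (s(a, ·)) ++ weightedPairs (b :: l)))
  | _ => []

section

variable {V : Type*}

theorem IsDecreasing.mono {f : Sym2 V → ℕ} {s t : ℕ} (hst : s ≤ t) :
    ∀ {l : List V}, IsDecreasing f s l → IsDecreasing f t l
  | _ :: _ :: _, h => ⟨h.1.trans_le hst, h.2⟩
  | [_], _ => trivial
  | [], _ => trivial

theorem IsDecreasing.getElem_lt {f : Sym2 V → ℕ} :
    ∀ {t : ℕ} {l : List V}, IsDecreasing f t l → ∀ (j : ℕ) (hj : j + 2 < l.length),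
      f s(l[j + 1], l[j + 2]) < f s(l[j], l[j + 1])
  | _, _ :: _ :: _ :: _, h, 0, _ => h.2.1
  | _, _ :: b :: c :: l, h, j + 1, hj =>
    IsDecreasing.getElem_lt (l := b :: c :: l) h.2 j (by simpa using hj)
  | _, [_, _], _, _, hj => by simp at hj
  | _, [_], _, _, hj => by simp at hj
  | _, [], _, _, hj => by simp at hj

theorem length_weightedPairs_cons (a : V) (l : List V) :
    (weightedPairs (a :: l)).length = l.length ^ 2 := by
  induction l generalizing a with
  | nil => rfl
  | cons b l ih =>
    simp only [weightedPairs, List.length_cons, List.length_append, List.length_map, ih]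
    ring

variable [DecidableEq V]

theorem count_weightedPairs_le_cons (e : Sym2 V) (a : V) :
    ∀ l : List V, (weightedPairs l).count e ≤ (weightedPairs (a :: l)).count e
  | [] => Nat.zero_le _
  | b :: l => by
    simp only [weightedPairs, List.count_cons, List.count_append]
    omega

theorem one_le_count_weightedPairs (a b : V) (l : List V) :
    1 ≤ (weightedPairs (a :: b :: l)).count s(a, b) := by
  simp [weightedPairs]

theorem two_le_count_weightedPairs {a b x : V} {l : List V} (hx : x ∈ l) :
    2 ≤ (weightedPairs (a :: b :: l)).count s(a, x) := by
  have : 1 ≤ (l.map (s(a, ·))).count s(a, x) :=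
    List.count_pos_iff.2 (List.mem_map_of_mem hx)
  simp only [weightedPairs, List.count_cons, List.count_append]
  omega

/-- An edge whose label is not below `t`, joining the head of a decreasing path to another of its
vertices, is not the first edge of the path. -/
theorem IsDecreasing.two_le_count {f : Sym2 V → ℕ} {t : ℕ} {a x : V} {l : List V}
    (h : IsDecreasing f t (a :: l)) (hx : x ∈ l) (ht : t ≤ f s(a, x)) :
    2 ≤ (weightedPairs (a :: l)).count s(a, x) := by
  match l, h, hx with
  | b :: l, h, hx =>
    rcases List.mem_cons.1 hx with rfl | hx
    · exact absurd h.1 ht.not_gt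
    · exact two_le_count_weightedPairs hx

variable [Fintype V]

/-- The pedestrian argument: one walker starts at each vertex, edges are called in increasing
order of their labels, and the walkers at the ends of the called edge swap places unless one of
them would revisit a vertex. The list `v :: T v` is the reversed trail of the walker at `v`. -/
theorem exists_trails {f : Sym2 V → ℕ} (hf : Set.InjOn f {e | ¬ e.IsDiag}) (t : ℕ) :
    ∃ T : V → List V, (∀ v, (v :: T v).Nodup) ∧ (∀ v, IsDecreasing f t (v :: T v)) ∧
      ∀ e : Sym2 V, ¬ e.IsDiag → f e < t → 2 ≤ ∑ v, (weightedPairs (v :: T v)).count e := by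
  induction t with
  | zero => exact ⟨fun _ => [], by simp, fun _ => trivial, by simp⟩
  | succ t ih =>
    obtain ⟨T, hnodup, hdec, hcount⟩ := ih
    have hdec' v : IsDecreasing f (t + 1) (v :: T v) := (hdec v).mono t.le_succ
    by_cases hex : ∃ u v, u ≠ v ∧ f s(u, v) = t
    swap
    · refine ⟨T, hnodup, hdec', fun e he hlt => hcount e he ?_⟩
      refine (Nat.lt_succ_iff.1 hlt).lt_of_ne fun het => hex ?_
      induction e with | _ u v => exact ⟨u, v, by simpa using he, het⟩
    obtain ⟨u, v, huv, hft⟩ := hex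
    have heq {e : Sym2 V} (he : ¬ e.IsDiag) (hlt : f e < t + 1) : f e < t ∨ e = s(u, v) := by
      rcases (Nat.lt_succ_iff.1 hlt).lt_or_eq with h | h
      · exact .inl h
      · exact .inr (hf he (by simpa using huv) (h.trans hft.symm))
    have hstay {a x : V} (hax : s(a, x) = s(u, v)) (hx : x ∈ T a) :
        2 ≤ ∑ w, (weightedPairs (w :: T w)).count s(u, v) := by
      rw [← hax]
      exact ((hdec a).two_le_count hx (by rw [hax, hft])).trans
        (Finset.single_le_sum (f := fun w => (weightedPairs (w :: T w)).count s(a, x))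
          (fun _ _ => Nat.zero_le _) (Finset.mem_univ a))
    by_cases hmem : u ∈ T v ∨ v ∈ T u
    · refine ⟨T, hnodup, hdec', fun e he hlt => ?_⟩
      rcases heq he hlt with h | rfl
      · exact hcount e he h
      · exact hmem.elim (hstay Sym2.eq_swap) (hstay rfl)
    push Not at hmem
    let σ := Equiv.swap u v
    let T' : V → List V := fun w => if w = u ∨ w = v then σ w :: T (σ w) else T w
    have hTu : T' u = v :: T v := by simp [T', σ]
    have hTv : T' v = u :: T u := by simp [T', σ]
    have hT {w : V} (hu : w ≠ u) (hv : w ≠ v) : T' w = T w := by simp [T', hu, hv]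
    have hforall {p : V → List V → Prop} (hu : p u (v :: T v)) (hv : p v (u :: T u))
        (h : ∀ w, w ≠ u → w ≠ v → p w (T w)) (w : V) : p w (T' w) := by
      by_cases hwu : w = u
      · rw [hwu, hTu]; exact hu
      by_cases hwv : w = v
      · rw [hwv, hTv]; exact hv
      rw [hT hwu hwv]; exact h w hwu hwv
    refine ⟨T', hforall (p := fun w l => (w :: l).Nodup) ?_ ?_ fun w _ _ => hnodup w,
      hforall (p := fun w l => IsDecreasing f (t + 1) (w :: l)) ?_ ?_ fun w _ _ => hdec' w,
      fun e he hlt => ?_⟩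
    · exact List.nodup_cons.2 ⟨by simp [huv, hmem.1], hnodup v⟩
    · exact List.nodup_cons.2 ⟨by simp [huv.symm, hmem.2], hnodup u⟩
    · exact ⟨by omega, hft ▸ hdec v⟩
    · rw [Sym2.eq_swap] at hft
      exact ⟨by omega, hft ▸ hdec u⟩
    rcases heq he hlt with h | rfl
    · refine (hcount e he h).trans ?_
      rw [← Equiv.sum_comp σ]
      refine Finset.sum_le_sum fun w _ => ?_
      refine hforall (p := fun w l => (weightedPairs (σ w :: T (σ w))).count e ≤
        (weightedPairs (w :: l)).count e) ?_ ?_ (fun w hu hv => ?_) w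
      · simpa [σ] using count_weightedPairs_le_cons e u (v :: T v)
      · simpa [σ] using count_weightedPairs_le_cons e v (u :: T u)
      · simp [σ, Equiv.swap_apply_of_ne_of_ne hu hv]
    · refine le_trans ?_ (Finset.sum_le_sum_of_subset (Finset.subset_univ {u, v}))
      rw [Finset.sum_pair huv, hTu, hTv]
      have h₁ := one_le_count_weightedPairs u v (T v)
      have h₂ := one_le_count_weightedPairs v u (T u)
      rw [Sym2.eq_swap] at h₂
      omega

/-- Some decreasing path has squared length at least `card V - 1`. -/
theorem exists_isDecreasing_card_le_sq [Nonempty V] {f : Sym2 V → ℕ}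
    (hf : Set.InjOn f {e | ¬ e.IsDiag}) :
    ∃ (t : ℕ) (v : V) (l : List V), (v :: l).Nodup ∧ IsDecreasing f t (v :: l) ∧
      Fintype.card V - 1 ≤ l.length ^ 2 := by
  obtain ⟨t, ht⟩ := (Set.finite_range f).bddAbove
  obtain ⟨T, hnodup, hdec, hcount⟩ := exists_trails hf (t + 1)
  let E : Finset (Sym2 V) := {e | ¬ e.IsDiag}
  have hE : E.card = (Fintype.card V).choose 2 := by
    rw [← Sym2.card_subtype_not_diag, Fintype.card_subtype]
  have hle : Fintype.card V * (Fintype.card V - 1) ≤ ∑ v, (T v).length ^ 2 := calc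
    Fintype.card V * (Fintype.card V - 1) = E.card * 2 := by
      rw [hE, Nat.choose_two_right, Nat.div_mul_cancel (Nat.even_mul_pred_self _).two_dvd]
    _ ≤ ∑ e ∈ E, ∑ v, (weightedPairs (v :: T v)).count e :=
      Finset.card_nsmul_le_sum _ _ _ fun e he =>
        hcount e (by simpa [E] using he) (Nat.lt_succ_iff.2 (ht ⟨e, rfl⟩))
    _ = ∑ v, ∑ e ∈ E, (weightedPairs (v :: T v)).count e := Finset.sum_comm
    _ ≤ ∑ v, (T v).length ^ 2 := by
      refine Finset.sum_le_sum fun v _ => ?_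
      rw [← length_weightedPairs_cons v]
      refine (Finset.sum_le_sum_of_subset (Finset.subset_univ E)).trans_eq ?_
      simpa only [Multiset.coe_count, Multiset.coe_card] using
        Multiset.sum_count_eq_card (m := (weightedPairs (v :: T v) : Multiset (Sym2 V)))
          fun e _ => Finset.mem_univ e
  obtain ⟨v, -, hv⟩ := Finset.exists_le_of_sum_le (s := Finset.univ)
    (f := fun _ : V => Fintype.card V - 1) (g := fun v => (T v).length ^ 2)
    Finset.univ_nonempty (by simpa using hle)
  exact ⟨t + 1, v, T v, hnodup v, hdec v, hv⟩

end

/-- For any bijection `f` from the edge set of `K_n` to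
`{1, ..., n(n-1)/2}`, there is a simple path (no repeated vertices) of length
at least `√(n-1)` whose edge labels are strictly increasing. -/
theorem increasing_path_of_length_sqrt
    (n : ℕ) (hn : 2 ≤ n) (f : Sym2 (Fin n) → ℕ)
    (hf : Set.BijOn f {e : Sym2 (Fin n) | ¬ e.IsDiag} (Set.Icc 1 (n * (n - 1) / 2))) :
    ∃ (k : ℕ) (w : ℕ → Fin n), Real.sqrt ((n : ℝ) - 1) ≤ (k : ℝ) ∧
      (∀ i ≤ k, ∀ j ≤ k, w i = w j → i = j) ∧
      (∀ i, i + 1 < k → f s(w i, w (i + 1)) < f s(w (i + 1), w (i + 2))) := by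
  have : Nonempty (Fin n) := ⟨⟨0, by omega⟩⟩
  obtain ⟨t, v, l, hnodup, hdec, hle⟩ := exists_isDecreasing_card_le_sq hf.injOn
  have hget (i : ℕ) : l.length - i < (v :: l).length := by
    rw [List.length_cons]; omega
  refine ⟨l.length, fun i => (v :: l)[l.length - i]'(hget i), ?_, fun i hi j hj hij => ?_,
    fun i hi => ?_⟩
  · refine Real.sqrt_le_iff.2 ⟨Nat.cast_nonneg _, ?_⟩
    rw [Fintype.card_fin, Nat.sub_le_iff_le_add] at hle
    rw [sub_le_iff_le_add]
    exact_mod_cast hle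
  · have := (hnodup.getElem_inj_iff).1 hij
    omega
  · obtain ⟨j, hj⟩ : ∃ j, l.length = i + 2 + j := ⟨l.length - (i + 2), by omega⟩
    have h := hdec.getElem_lt j (by rw [List.length_cons]; omega)
    have h₀ : l.length - i = j + 2 := by omega
    have h₁ : l.length - (i + 1) = j + 1 := by omega
    have h₂ : l.length - (i + 2) = j := by omega
    simp only [h₀, h₁, h₂]
    rw [Sym2.eq_swap]
    exact h.trans_eq (congrArg f Sym2.eq_swap)
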